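/- Let 𝒯 be a T-mesh of Ω with d ≥ 2. Then every (d−2)-dimensional mesh entity T ∈ H^{d−2} with T ⊄ ∂Ω lies in the boundary of at least three and at most four hyperfaces of H^{d−1}. Consequently every T-junction has valence exactly 3, and its associated cell ascell(T), its orthogonal direction odir(T) and its pointing direction pdir(T) are uniquely determined by T. -/

import Mathlib

/-!
Let `J` be a codimension-two entity not contained in `∂Ω`, with singleton directions `i ≠ j`.
Pick `x ∈ J` with non-integer coordinates in all other directions. The four *arms* `x ± eᵢ/2`,
`x ± eⱼ/2` each lie in one entity. A hyperface has `J` in its boundary if and only if it contains an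
arm, and different arms give different hyperfaces, so the valence of `J` is the number of arms that
lie in hyperfaces (`Star.hyper_eq_image`, `Star.hyper_inj`); an arm in no hyperface lies in a cell.

At most one arm can lie in a cell (`Star.missing_unique`). If two adjacent arms did, both cells
would contain the quadrant between them, hence be equal and contain `x` by convexity. Two opposite
arms cannot, since `J` lies in the closure of hyperfaces orthogonal to each of its two singleton
directions. So the valence is 3 or 4, and for a T-junction the unique missing arm determines the
associated cell and both directions (`Star.tjdata_of_missing`, `Star.missing_of_tjdata`).

This uses two facts about the whole mesh that hold because it arises by bisections: an entity
meeting the closure of another one is contained in it, and an entity with `j`-th component `{t}`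
lies in the closure of a hyperface with the same `j`-th component. Both are kept by a bisection of a
cell `Q` because interval components are dyadic relative to the initial grid: an entity in the
closure of `Q` either has the same component as `Q` in the bisected direction, and is split along
with it, or lies on one side of the midpoint or on the bisecting hyperplane
(`Dyadic.halving`, `IsChild.trichotomy`, `inv_midSplit`).
-/

open Set

namespace TSpline

/-- A box in `ℝ^d`, given componentwise. -/
abbrev Box (d : ℕ) := Fin d → Set ℝ

/-- The subset of `ℝ^d` determined by a box. -/
def toSet {d : ℕ} (E : Box d) : Set (Fin d → ℝ) := Set.pi Set.univ E

/-- The closed index domain `cl Ω = ∏ₖ [0, Nₖ]`. -/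
def domain {d : ℕ} (N : Fin d → ℕ) : Set (Fin d → ℝ) :=
  Set.pi Set.univ (fun k => Set.Icc (0 : ℝ) (N k))

/-- The boundary `∂Ω` of the index domain. -/
def bdryDomain {d : ℕ} (N : Fin d → ℕ) : Set (Fin d → ℝ) := frontier (domain N)

/-- A component which is an integer singleton `{n}`, `0 ≤ n ≤ Nₖ`. -/
def IsSingletonComp (Nk : ℕ) (S : Set ℝ) : Prop :=
  ∃ n : ℕ, n ≤ Nk ∧ S = {(n : ℝ)}

/-- A component which is an open interval with integer endpoints in `[0, Nₖ]`. -/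
def IsIntervalComp (Nk : ℕ) (S : Set ℝ) : Prop :=
  ∃ a b : ℕ, a < b ∧ b ≤ Nk ∧ S = Set.Ioo (a : ℝ) (b : ℝ)

/-- A mesh entity: every component is an integer singleton or an open integer interval. -/
def IsMeshEntity {d : ℕ} (N : Fin d → ℕ) (E : Box d) : Prop :=
  ∀ k, IsSingletonComp (N k) (E k) ∨ IsIntervalComp (N k) (E k)

/-- The directions in which an entity has a singleton component. -/
def singDirs {d : ℕ} (E : Box d) : Set (Fin d) := {i | ∃ r : ℝ, E i = {r}}

/-- Split all entities of `M` contained in the region `D` whose `j`-th component is `Q j`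
into the three children obtained by bisecting the `j`-th component at `m`. -/
def midSplit {d : ℕ} (M : Set (Box d)) (Q : Box d) (j : Fin d) (m : ℝ) (D : Box d) :
    Set (Box d) :=
  (M \ {E | E ∈ M ∧ (∀ k, E k ⊆ D k) ∧ E j = Q j}) ∪
  ⋃ E ∈ {E | E ∈ M ∧ (∀ k, E k ⊆ D k) ∧ E j = Q j},
    ({Function.update E j (Set.Ioo (sInf (Q j)) m),
      Function.update E j {m},
      Function.update E j (Set.Ioo m (sSup (Q j)))} : Set (Box d))

/-- One symmetric bisection of a `d`-dimensional cell with integer midpoint. -/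
def BisectStep {d : ℕ} (N : Fin d → ℕ) (M M' : Set (Box d)) : Prop :=
  ∃ Q ∈ M, ∃ j : Fin d, ∃ a b mid : ℕ,
    (∀ k, IsIntervalComp (N k) (Q k)) ∧
    Q j = Set.Ioo (a : ℝ) (b : ℝ) ∧ a + b = 2 * mid ∧
    M' = midSplit M Q j (mid : ℝ) (fun k => closure (Q k))

/-- A tensor-product mesh with integer breakpoints. -/
def IsTensorMesh {d : ℕ} (N : Fin d → ℕ) (M : Set (Box d)) : Prop :=
  ∃ G : Fin d → Finset ℕ,
    (∀ k, 0 ∈ G k ∧ N k ∈ G k ∧ ∀ n ∈ G k, n ≤ N k) ∧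
    M = {E | ∀ k, (∃ n ∈ G k, E k = {(n : ℝ)}) ∨
          (∃ a ∈ G k, ∃ b ∈ G k, a < b ∧ (∀ c ∈ G k, c ≤ a ∨ b ≤ c) ∧
            E k = Set.Ioo (a : ℝ) (b : ℝ))}

/-- A T-mesh of the index domain: a finite disjoint partition of `cl Ω` into mesh
entities, obtained from a tensor-product mesh by repeated symmetric bisections. -/
structure TMesh (d : ℕ) (N : Fin d → ℕ) where
  entities : Set (Box d)
  finite : entities.Finite
  mem_entity : ∀ E ∈ entities, IsMeshEntity N E
  union_eq : (⋃ E ∈ entities, toSet E) = domain N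
  pairwise_disjoint : ∀ E ∈ entities, ∀ F ∈ entities, E ≠ F → toSet E ∩ toSet F = ∅
  constructed : ∃ M₀ : Set (Box d), IsTensorMesh N M₀ ∧
    Relation.ReflTransGen (BisectStep N) M₀ entities

variable {d : ℕ} {N : Fin d → ℕ}

/-- `H^k`: the entities with exactly `d - k` singleton components. -/
def Hdim (T : TMesh d N) (k : ℕ) : Set (Box d) :=
  {E ∈ T.entities | (singDirs E).ncard = d - k}

/-- The `j`-orthogonal skeleton `Sk_j`. -/
def skel (T : TMesh d N) (j : Fin d) : Set (Fin d → ℝ) :=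
  ⋃ F ∈ {F ∈ Hdim T (d - 1) | ∃ r : ℝ, F j = {r}}, closure (toSet F)

/-- The valence of a `(d-2)`-dimensional entity: the number of hyperfaces in whose
boundary it lies. -/
noncomputable def valence (T : TMesh d N) (J : Box d) : ℕ :=
  {F ∈ Hdim T (d - 1) | toSet J ⊆ frontier (toSet F)}.ncard

/-- A T-junction (hanging interface). -/
def IsTJunction (T : TMesh d N) (J : Box d) : Prop :=
  J ∈ Hdim T (d - 2) ∧ ¬ toSet J ⊆ bdryDomain N ∧ valence T J < 4

/-- `TJData T J Q i j`: `Q` is an associated cell of the T-junction `J`, with orthogonal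
direction `i` and pointing direction `j`. -/
def TJData (T : TMesh d N) (J Q : Box d) (i j : Fin d) : Prop :=
  Q ∈ Hdim T d ∧ toSet J ⊆ frontier (toSet Q) ∧
  closure (toSet J) ∩ Set.pi Set.univ (fun k => frontier (Q k)) = ∅ ∧
  i ≠ j ∧ (∃ r : ℝ, J i = {r}) ∧ (∃ r : ℝ, J j = {r}) ∧
  J i ⊆ Q i ∧ J i ≠ Q i ∧ J j ⊆ frontier (Q j)

/-- `⌊(p_k + 1)/2⌋`. -/
def halfdeg (p : Fin d → ℕ) (k : Fin d) : ℕ := (p k + 1) / 2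

/-- The active region `AR_p`. -/
def activeRegion (N p : Fin d → ℕ) : Set (Fin d → ℝ) :=
  Set.pi Set.univ (fun k => Set.Icc (halfdeg p k : ℝ) ((N k : ℝ) - (halfdeg p k : ℝ)))

/-- The slice `S_k(n)`. -/
def slice (N : Fin d → ℕ) (k : Fin d) (n : ℕ) : Set (Fin d → ℝ) :=
  {x ∈ domain N | x k = (n : ℝ)}

/-- The `k`-th frame region `FR^(k)`. -/
def frameRegion (N p : Fin d → ℕ) (k : Fin d) : Set (Fin d → ℝ) :=
  {x ∈ domain N | x k ∈ Set.Icc (0 : ℝ) (halfdeg p k : ℝ) ∪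
      Set.Icc ((N k : ℝ) - (halfdeg p k : ℝ)) (N k : ℝ)}

/-- Admissibility of a T-mesh. -/
def Admissible (p : Fin d → ℕ) (T : TMesh d N) : Prop :=
  (∀ k : Fin d, ∀ J Q : Box d, ∀ i j : Fin d, IsTJunction T J → TJData T J Q i j →
      (i = k ∨ j = k) → ¬ toSet J ⊆ frameRegion N p k) ∧
  (∀ k : Fin d, ∀ n : ℕ, (n ≤ halfdeg p k ∨ (N k - halfdeg p k ≤ n ∧ n ≤ N k)) →
      slice N k n ⊆ skel T k)

/-- Anchors of degree `p`. -/
def IsAnchor (p : Fin d → ℕ) (T : TMesh d N) (A : Box d) : Prop :=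
  A ∈ T.entities ∧ toSet A ⊆ activeRegion N p ∧
  ∀ j : Fin d, (∃ r : ℝ, A j = {r}) ↔ Odd (p j)

/-- `P_{j,n}(E)`: replace the `j`-th component of `E` by `{n}`. -/
def proj {d : ℕ} (E : Box d) (j : Fin d) (n : ℕ) : Box d :=
  Function.update E j {(n : ℝ)}

/-- The global knot vector `gv_j(E)` (as a set of integer indices). -/
def gv (T : TMesh d N) (j : Fin d) (E : Box d) : Set ℕ :=
  {n | n ≤ N j ∧ toSet (proj E j n) ⊆ skel T j}

/-- `V` is a block of consecutive entries of `G`. -/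
def IsBlockOf (V G : Set ℕ) : Prop :=
  V ⊆ G ∧ V.Finite ∧ ∀ g ∈ G, ∀ a ∈ V, ∀ b ∈ V, a ≤ g → g ≤ b → g ∈ V

/-- Two knot vectors overlap (`⋈`): both occur as blocks of consecutive entries of a
common knot vector. -/
def Overlaps (V₁ V₂ : Set ℕ) : Prop :=
  ∃ W : Set ℕ, W.Finite ∧ IsBlockOf V₁ W ∧ IsBlockOf V₂ W

/-- The convex hull in `ℝ` of a set of integer indices. -/
def convOf (V : Set ℕ) : Set ℝ := convexHull ℝ ((fun n : ℕ => (n : ℝ)) '' V)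

/-- The local knot vector of an anchor `A` in direction `j`: the block of `p_j + 2`
consecutive entries of `gv_j(A)` whose entry of rank `⌊(p_j+1)/2⌋` is `inf A_j`. -/
def IsAnchorKV (T : TMesh d N) (p : Fin d → ℕ) (A : Box d) (j : Fin d) (V : Set ℕ) : Prop :=
  IsBlockOf V (gv T j A) ∧ V.ncard = p j + 2 ∧
  ∃ a : ℕ, (a : ℝ) = sInf (A j) ∧ a ∈ V ∧ {v ∈ V | v < a}.ncard = halfdeg p j

open Classical in
noncomputable def anchorKV (T : TMesh d N) (p : Fin d → ℕ) (A : Box d) (j : Fin d) :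
    Set ℕ :=
  if h : ∃ V, IsAnchorKV T p A j V then h.choose else ∅

/-- The index support of an anchor. -/
noncomputable def suppA (T : TMesh d N) (p : Fin d → ℕ) (A : Box d) : Set (Fin d → ℝ) :=
  Set.pi Set.univ (fun k => convOf (anchorKV T p A k))

/-- The local knot vector of a T-junction `J` (with associated cell `Q`, orthogonal
direction `i`, pointing direction `j`) in direction `k`. -/
def IsTJKV (T : TMesh d N) (p : Fin d → ℕ) (J Q : Box d) (i j k : Fin d) (V : Set ℕ) :
    Prop :=
  if k = i then ∃ t : ℕ, J i = {(t : ℝ)} ∧ V = {t}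
  else if k = j then
    IsBlockOf V (gv T j J) ∧ V.ncard = p j + 1 ∧
    ((Even (p j) ∧ ∃ t : ℕ, J j = {(t : ℝ)} ∧ t ∈ V ∧ {v ∈ V | v < t}.ncard = p j / 2) ∨
     (Odd (p j) ∧ ∃ a b : ℕ, (a : ℝ) = sInf (Q j) ∧ (b : ℝ) = sSup (Q j) ∧ a ∈ V ∧ b ∈ V ∧
        {v ∈ V | v < a}.ncard = p j / 2 ∧ {v ∈ V | v < b}.ncard = p j / 2 + 1))
  else
    IsBlockOf V (gv T k J) ∧ V.ncard = p k + 2 + p k % 2 ∧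
    ∃ a b : ℕ, a ∈ V ∧ b ∈ V ∧ J k = Set.Ioo (a : ℝ) (b : ℝ) ∧
      {v ∈ V | v < a}.ncard = (p k + 1) / 2 ∧ {v ∈ V | v < b}.ncard = (p k + 1) / 2 + 1

/-- Local knot vector of a T-junction, quantifying over the (unique) associated data. -/
def IsTJKVFull (T : TMesh d N) (p : Fin d → ℕ) (J : Box d) (k : Fin d) (V : Set ℕ) :
    Prop :=
  ∃ Q : Box d, ∃ i j : Fin d, TJData T J Q i j ∧ IsTJKV T p J Q i j k V

open Classical in
noncomputable def tjKV (T : TMesh d N) (p : Fin d → ℕ) (J : Box d) (k : Fin d) : Set ℕ :=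
  if h : ∃ V, IsTJKVFull T p J k V then h.choose else ∅

/-- The geometric T-junction extension `GTJ(J)`. -/
noncomputable def GTJ (T : TMesh d N) (p : Fin d → ℕ) (J : Box d) : Set (Fin d → ℝ) :=
  Set.pi Set.univ (fun k => convOf (tjKV T p J k))

/-- `J` is a T-junction with orthogonal direction `i` and pointing direction `j`. -/
def HasDirs (T : TMesh d N) (J : Box d) (i j : Fin d) : Prop :=
  IsTJunction T J ∧ ∃ Q : Box d, TJData T J Q i j

/-- Strong geometric analysis-suitability. -/
def SGAS (T : TMesh d N) (p : Fin d → ℕ) : Prop :=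
  ∀ J₁ J₂ : Box d, ∀ i₁ j₁ i₂ j₂ : Fin d,
    HasDirs T J₁ i₁ j₁ → HasDirs T J₂ i₂ j₂ → i₁ ≠ i₂ →
    GTJ T p J₁ ∩ GTJ T p J₂ = ∅

/-- Weak geometric analysis-suitability. -/
def WGAS (T : TMesh d N) (p : Fin d → ℕ) : Prop :=
  ∀ J₁ J₂ : Box d, ∀ i₁ j₁ i₂ j₂ : Fin d,
    HasDirs T J₁ i₁ j₁ → HasDirs T J₂ i₂ j₂ → i₁ ≠ i₂ → j₁ ≠ j₂ →
    GTJ T p J₁ ∩ GTJ T p J₂ = ∅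

/-- The abstract T-junction extension `ATJ_j(n)`. -/
noncomputable def ATJ (T : TMesh d N) (p : Fin d → ℕ) (j : Fin d) (n : ℕ) :
    Set (Fin d → ℝ) :=
  slice N j n ∩
  (⋃ A ∈ {A : Box d | IsAnchor p T A ∧ n ∈ gv T j A}, suppA T p A) ∩
  (⋃ A ∈ {A : Box d | IsAnchor p T A ∧ n ∉ gv T j A}, suppA T p A)

/-- `ATJ_j = ⋃ₙ ATJ_j(n)`. -/
noncomputable def ATJfull (T : TMesh d N) (p : Fin d → ℕ) (j : Fin d) :
    Set (Fin d → ℝ) :=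
  ⋃ n ∈ Set.Iic (N j), ATJ T p j n

/-- Abstract analysis-suitability. -/
def AAS (T : TMesh d N) (p : Fin d → ℕ) : Prop :=
  ∀ i j : Fin d, i ≠ j → ∀ n m : ℕ, n ≤ N i → m ≤ N j →
    ATJ T p i n ∩ ATJ T p j m = ∅

/-- Two anchors weakly partially overlap. -/
def WeakPartOverlap (T : TMesh d N) (p : Fin d → ℕ) (A₁ A₂ : Box d) : Prop :=
  ∃ ℓ : Fin d, anchorKV T p A₁ ℓ ≠ anchorKV T p A₂ ℓ ∧
    Overlaps (anchorKV T p A₁ ℓ) (anchorKV T p A₂ ℓ)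

/-- Two anchors strongly partially overlap. -/
def StrongPartOverlap (T : TMesh d N) (p : Fin d → ℕ) (A₁ A₂ : Box d) : Prop :=
  suppA T p A₁ ∩ suppA T p A₂ = ∅ ∨
  d - 1 ≤ {k : Fin d | Overlaps (anchorKV T p A₁ k) (anchorKV T p A₂ k)}.ncard

/-- Weak dual-compatibility. -/
def WDC (T : TMesh d N) (p : Fin d → ℕ) : Prop :=
  ∀ A₁ A₂ : Box d, IsAnchor p T A₁ → IsAnchor p T A₂ → A₁ ≠ A₂ →
    WeakPartOverlap T p A₁ A₂

/-- Strong dual-compatibility. -/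
def SDC (T : TMesh d N) (p : Fin d → ℕ) : Prop :=
  ∀ A₁ A₂ : Box d, IsAnchor p T A₁ → IsAnchor p T A₂ → A₁ ≠ A₂ →
    StrongPartOverlap T p A₁ A₂

/-- `Q'` is a neighboring cell of `Q` in direction `ℓ`. -/
def NeighborInDir (T : TMesh d N) (Q Q' : Box d) (ℓ : Fin d) : Prop :=
  Q' ∈ Hdim T d ∧ Q' ≠ Q ∧
  (sSup (Q ℓ) = sInf (Q' ℓ) ∨ sSup (Q' ℓ) = sInf (Q ℓ)) ∧
  ∀ k : Fin d, k ≠ ℓ → (Q k ∩ Q' k).Nonempty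

/-- Assumption A: every cell has neighbor cells in the active region in at least three
pairwise distinct directions. -/
def AssumptionA (T : TMesh d N) (p : Fin d → ℕ) : Prop :=
  ∀ Q ∈ Hdim T d, ∃ l₁ l₂ l₃ : Fin d, l₁ ≠ l₂ ∧ l₁ ≠ l₃ ∧ l₂ ≠ l₃ ∧
    ∀ l ∈ ({l₁, l₂, l₃} : Set (Fin d)),
      ∃ Q' : Box d, NeighborInDir T Q Q' l ∧ toSet Q' ⊆ activeRegion N p

/-- The extended region `D` of Algorithm `subdiv`. -/
def extendD (N p : Fin d → ℕ) (Q : Box d) (j : Fin d) : Box d := fun ℓ =>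
  closure (Q ℓ) ∪
  {x : ℝ | ℓ ≠ j ∧ sInf (Q ℓ) = (halfdeg p ℓ : ℝ) ∧
      x ∈ Set.Icc (0 : ℝ) (halfdeg p ℓ : ℝ)} ∪
  {x : ℝ | ℓ ≠ j ∧ sSup (Q ℓ) = (N ℓ : ℝ) - (halfdeg p ℓ : ℝ) ∧
      x ∈ Set.Icc ((N ℓ : ℝ) - (halfdeg p ℓ : ℝ)) (N ℓ : ℝ)}

/-- The entity set produced by Algorithm `subdiv(𝒯, Q, j)`. -/
def subdivEntities (N p : Fin d → ℕ) (M : Set (Box d)) (Q : Box d) (j : Fin d) :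
    Set (Box d) :=
  midSplit M Q j ((sInf (Q j) + sSup (Q j)) / 2) (extendD N p Q j)

open Classical in
/-- The componentwise minimal bounding box `M(E,F)`. -/
noncomputable def MBox {d : ℕ} (E F : Box d) : Box d := fun ℓ =>
  if (E ℓ ∩ F ℓ).Nonempty then E ℓ ∩ F ℓ
  else if sSup (E ℓ) ≤ sInf (F ℓ) then Set.Icc (sSup (E ℓ)) (sInf (F ℓ))
  else Set.Icc (sSup (F ℓ)) (sInf (E ℓ))

/-- `V` is the local knot vector of `E` (an anchor or a T-junction) in direction `j`. -/
def IsLocalKVOf (T : TMesh d N) (p : Fin d → ℕ) (E : Box d) (j : Fin d) (V : Set ℕ) :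
    Prop :=
  (IsAnchor p T E ∧ IsAnchorKV T p E j V) ∨
  (IsTJunction T E ∧ IsTJKVFull T p E j V)

end TSpline

namespace TSpline

/-! ### Dyadic intervals over a grid -/

/-- `Half p q`: the integer interval `q` is one of the two halves of the interval `p`, whose
midpoint is an integer. Intervals are encoded by their pairs of endpoints. -/
def Half (p q : ℕ × ℕ) : Prop :=
  ∃ m, p.1 + p.2 = 2 * m ∧ (q = (p.1, m) ∨ q = (m, p.2))

/-- `GridBase G p`: the endpoints of `p` are consecutive breakpoints of the grid `G`. -/
def GridBase (G : Finset ℕ) (p : ℕ × ℕ) : Prop :=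
  p.1 ∈ G ∧ p.2 ∈ G ∧ p.1 < p.2 ∧ ∀ c ∈ G, c ≤ p.1 ∨ p.2 ≤ c

/-- The intervals obtained from those between consecutive breakpoints of `G` by repeatedly
passing to halves. -/
def Dyadic (G : Finset ℕ) (p : ℕ × ℕ) : Prop :=
  ∃ q, GridBase G q ∧ Relation.ReflTransGen Half q p

lemma half_lt {p q : ℕ × ℕ} (h : Half p q) (hp : p.1 < p.2) :
    q.1 < q.2 ∧ p.1 ≤ q.1 ∧ q.2 ≤ p.2 := by
  obtain ⟨m, hm, rfl | rfl⟩ := h <;> simp <;> omega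

lemma halves_lt {p q : ℕ × ℕ} (h : Relation.ReflTransGen Half p q) (hp : p.1 < p.2) :
    q.1 < q.2 ∧ p.1 ≤ q.1 ∧ q.2 ≤ p.2 := by
  induction h with
  | refl => exact ⟨hp, le_rfl, le_rfl⟩
  | tail _ h2 ih =>
    have := half_lt h2 ih.1
    omega

lemma Dyadic.lt {G : Finset ℕ} {p : ℕ × ℕ} (h : Dyadic G p) : p.1 < p.2 := by
  obtain ⟨q, hq, h⟩ := h
  exact (halves_lt h hq.2.2.1).1

/-- Dyadic intervals form a laminar family: two of them are nested, the smaller one arising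
from the larger one by taking halves, or disjoint. -/
lemma Dyadic.laminar {G : Finset ℕ} {p q : ℕ × ℕ} (hp : Dyadic G p) (hq : Dyadic G q) :
    Relation.ReflTransGen Half p q ∨ Relation.ReflTransGen Half q p ∨
      p.2 ≤ q.1 ∨ q.2 ≤ p.1 := by
  obtain ⟨p₀, hp₀, hp⟩ := hp
  obtain ⟨q₀, hq₀, hq⟩ := hq
  induction hp with
  | refl =>
    by_cases h : p₀ = q₀
    · subst h; exact Or.inl hq
    · have hb := halves_lt hq hq₀.2.2.1
      obtain ⟨a1, a2, a3, a4⟩ := hp₀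
      obtain ⟨b1, b2, b3, b4⟩ := hq₀
      have h1 := a4 _ b1
      have h2 := a4 _ b2
      have h3 := b4 _ a1
      have h4 := b4 _ a2
      have : ¬ (p₀.1 = q₀.1 ∧ p₀.2 = q₀.2) := fun hh => h (Prod.ext hh.1 hh.2)
      omega
  | @tail p c h1 h2 ih =>
    have hlt := (halves_lt h1 hp₀.2.2.1).1
    have hc := half_lt h2 hlt
    rcases ih with h | h | h | h
    · rcases Relation.ReflTransGen.cases_head h with h | ⟨c', hc', h⟩
      · subst h; exact Or.inr (Or.inl (Relation.ReflTransGen.single h2))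
      · have hc'1 := half_lt hc' hlt
        have hq' := halves_lt h hc'1.1
        obtain ⟨m, hm, hcm⟩ := h2
        obtain ⟨m', hm', hcm'⟩ := hc'
        have : m = m' := by omega
        subst this
        rcases hcm with rfl | rfl <;> rcases hcm' with rfl | rfl
        · exact Or.inl h
        · simp at *; omega
        · simp at *; omega
        · exact Or.inl h
    · exact Or.inr (Or.inl (h.tail h2))
    · omega
    · omega

/-- A dyadic interval contained in the dyadic interval `p` with midpoint `m` is either `p`
or lies on one side of `m`. -/
lemma Dyadic.halving {G : Finset ℕ} {p q : ℕ × ℕ} {m : ℕ} (hp : Dyadic G p) (hq : Dyadic G q)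
    (hm : p.1 + p.2 = 2 * m) (h1 : p.1 ≤ q.1) (h2 : q.2 ≤ p.2) :
    q = p ∨ q.2 ≤ m ∨ m ≤ q.1 := by
  have hplt := hp.lt
  have hqlt := hq.lt
  rcases hp.laminar hq with h | h | h | h
  · rcases Relation.ReflTransGen.cases_head h with h | ⟨c', hc', h⟩
    · exact Or.inl h.symm
    · have := halves_lt h (half_lt hc' hplt).1
      obtain ⟨m', hm', hc⟩ := hc'
      have : m = m' := by omega
      subst this
      rcases hc with rfl | rfl
      · simp at this; omega
      · simp at this; omega
  · have := halves_lt h hqlt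
    exact Or.inl (Prod.ext (by omega) (by omega))
  · omega
  · omega

/-! ### Invariants of the bisection process -/

lemma Ioo_ne_singleton {a b : ℕ} (h : a < b) (r : ℝ) : Ioo (a : ℝ) b ≠ {r} := by
  intro h'
  have h0 : (a : ℝ) < b := by exact_mod_cast h
  have h1 : (a + (b - a) / 2 : ℝ) ∈ Ioo (a : ℝ) b := ⟨by linarith, by linarith⟩
  have h2 : (a + (b - a) / 3 : ℝ) ∈ Ioo (a : ℝ) b := ⟨by linarith, by linarith⟩
  rw [h', mem_singleton_iff] at h1 h2
  linarith

lemma closure_natIoo {a b : ℕ} (h : a < b) : closure (Ioo (a : ℝ) b) = Icc (a : ℝ) b :=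
  closure_Ioo (by exact_mod_cast h.ne)

lemma natIoo_inj {a b a' b' : ℕ} (h : a < b) (h' : a' < b')
    (he : Ioo (a : ℝ) b = Ioo (a' : ℝ) b') : a = a' ∧ b = b' := by
  have h1 := congrArg closure he
  rw [closure_natIoo h, closure_natIoo h'] at h1
  have := (Icc_eq_Icc_iff (by exact_mod_cast h.le)).1 h1
  exact_mod_cast this

/-- What is preserved by bisections, for a mesh `M` refining the grid `G`: interval components
are dyadic; an entity meeting the closure of another one is contained in it (the frontier
condition, written componentwise); and an entity whose `j`-th component is `{t}` lies in the
closure of a hyperface with `j`-th component `{t}`. -/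
structure Inv {d : ℕ} (G : Fin d → Finset ℕ) (M : Set (Box d)) : Prop where
  comp : ∀ E ∈ M, ∀ k, (∃ r : ℝ, E k = {r}) ∨
    ∃ a b : ℕ, Dyadic (G k) (a, b) ∧ E k = Ioo (a : ℝ) b
  front : ∀ E ∈ M, ∀ F ∈ M, (∀ k, (E k ∩ closure (F k)).Nonempty) → ∀ k, E k ⊆ closure (F k)
  hyp : ∀ E ∈ M, ∀ j, ∀ t : ℝ, E j = {t} → ∃ F ∈ M, F j = {t} ∧
    (∀ k, k ≠ j → ∃ a b : ℕ, a < b ∧ F k = Ioo (a : ℝ) b) ∧ ∀ k, E k ⊆ closure (F k)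

/-- In a nondegenerate grid every breakpoint is an endpoint of some grid interval. -/
lemma exists_adjacent {G : Finset ℕ} {n K : ℕ} (hK : 0 < K) (h0 : 0 ∈ G) (hKG : K ∈ G)
    (hle : ∀ n ∈ G, n ≤ K) (hn : n ∈ G) :
    ∃ a ∈ G, ∃ b ∈ G, a < b ∧ (∀ c ∈ G, c ≤ a ∨ b ≤ c) ∧ (n = a ∨ n = b) := by
  by_cases h : n < K
  · have hne : (G.filter (n < ·)).Nonempty := ⟨K, by simp [hKG, h]⟩
    have hm := Finset.min'_mem _ hne
    have hmin : ∀ c ∈ G.filter (n < ·), (G.filter (n < ·)).min' hne ≤ c :=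
      fun c hc => Finset.min'_le _ c hc
    generalize (G.filter (n < ·)).min' hne = b at hm hmin
    simp only [Finset.mem_filter] at hm hmin
    refine ⟨n, hn, b, hm.1, hm.2, fun c hc => ?_, Or.inl rfl⟩
    by_cases hcn : c ≤ n
    · exact Or.inl hcn
    · exact Or.inr (hmin c ⟨hc, by omega⟩)
  · have hnK : n = K := le_antisymm (hle n hn) (by omega)
    have hne : (G.filter (· < n)).Nonempty := ⟨0, by simp [h0]; omega⟩
    have hm := Finset.max'_mem _ hne
    have hmax : ∀ c ∈ G.filter (· < n), c ≤ (G.filter (· < n)).max' hne :=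
      fun c hc => Finset.le_max' _ c hc
    generalize (G.filter (· < n)).max' hne = a at hm hmax
    simp only [Finset.mem_filter] at hm hmax
    refine ⟨a, hm.1, n, hn, hm.2, fun c hc => ?_, Or.inr rfl⟩
    by_cases hcn : n ≤ c
    · exact Or.inr hcn
    · exact Or.inl (hmax c ⟨hc, by omega⟩)

lemma inv_tensor {d : ℕ} {N : Fin d → ℕ} (hN : ∀ k, 0 < N k) {G : Fin d → Finset ℕ}
    (hG : ∀ k, 0 ∈ G k ∧ N k ∈ G k ∧ ∀ n ∈ G k, n ≤ N k) :
    Inv G {E : Box d | ∀ k, (∃ n ∈ G k, E k = {(n : ℝ)}) ∨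
          (∃ a ∈ G k, ∃ b ∈ G k, a < b ∧ (∀ c ∈ G k, c ≤ a ∨ b ≤ c) ∧
            E k = Set.Ioo (a : ℝ) (b : ℝ))} where
  comp E hE k := by
    rcases hE k with ⟨n, _, h⟩ | ⟨a, ha, b, hb, hab, hc, h⟩
    · exact Or.inl ⟨_, h⟩
    · exact Or.inr ⟨a, b, ⟨(a, b), ⟨ha, hb, hab, hc⟩, .refl⟩, h⟩
  front E hE F hF hEF k := by
    obtain ⟨y, hy1, hy2⟩ := hEF k
    rcases hE k with ⟨n, hn, h⟩ | ⟨a, ha, b, hb, hab, hc, h⟩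
    · rw [h] at hy1 ⊢
      rw [mem_singleton_iff] at hy1
      subst hy1
      simpa using hy2
    · rw [h] at hy1 ⊢
      rcases hF k with ⟨n, hn, h'⟩ | ⟨a', ha', b', hb', hab', hc', h'⟩
      · rw [h', closure_singleton, mem_singleton_iff] at hy2
        subst hy2
        have h1 : a < n := by exact_mod_cast hy1.1
        have h2 : n < b := by exact_mod_cast hy1.2
        have := hc n hn
        omega
      · rw [h', closure_natIoo hab'] at hy2 ⊢
        have h1 : a < b' := by exact_mod_cast hy1.1.trans_le hy2.2
        have h2 : a' < b := by exact_mod_cast hy2.1.trans_lt hy1.2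
        have := hc a' ha'
        have := hc b' hb'
        have h3 : a' ≤ a := by omega
        have h4 : b ≤ b' := by omega
        refine Ioo_subset_Icc_self.trans (Icc_subset_Icc ?_ ?_) <;> exact_mod_cast (by assumption)
  hyp E hE j t ht := by
    have key : ∀ k, ∃ a ∈ G k, ∃ b ∈ G k, a < b ∧ (∀ c ∈ G k, c ≤ a ∨ b ≤ c) ∧
        E k ⊆ Icc (a : ℝ) b := by
      intro k
      rcases hE k with ⟨n, hn, h⟩ | ⟨a, ha, b, hb, hab, hc, h⟩
      · obtain ⟨a, ha, b, hb, hab, hc, hn'⟩ :=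
          exists_adjacent (hN k) (hG k).1 (hG k).2.1 (hG k).2.2 hn
        refine ⟨a, ha, b, hb, hab, hc, ?_⟩
        rw [h, singleton_subset_iff]
        have : a ≤ n ∧ n ≤ b := by omega
        exact ⟨by exact_mod_cast this.1, by exact_mod_cast this.2⟩
      · exact ⟨a, ha, b, hb, hab, hc, h ▸ Ioo_subset_Icc_self⟩
    choose a ha b hb hab hc hEsub using key
    refine ⟨Function.update (fun k => Ioo (a k : ℝ) (b k)) j {t}, ?_, by simp, ?_, ?_⟩
    · intro k
      by_cases hk : k = j
      · subst hk
        left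
        rcases hE k with ⟨n, hn, h⟩ | ⟨a, ha, b, hb, hab, hc, h⟩
        · exact ⟨n, hn, by simp [← ht, h]⟩
        · exact absurd (h.symm.trans ht) (Ioo_ne_singleton hab t)
      · right
        exact ⟨a k, ha k, b k, hb k, hab k, hc k, by simp [hk]⟩
    · intro k hk
      exact ⟨a k, b k, hab k, by simp [hk]⟩
    · intro k
      by_cases hk : k = j
      · subst hk
        simp [ht]
      · simp only [Function.update_of_ne hk]
        rw [closure_natIoo (hab k)]
        exact hEsub k

/-- `IsChild Q l a m b E E'`: `E'` is what becomes of the entity `E` when the cell `Q` with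
`l`-th component `(a, b)` is bisected at `m` in direction `l`; that is, `E` itself or one of its
three pieces. -/
def IsChild {d : ℕ} (Q : Box d) (l : Fin d) (a m b : ℕ) (E E' : Box d) : Prop :=
  (¬ ((∀ k, E k ⊆ closure (Q k)) ∧ E l = Q l) ∧ E' = E) ∨
  (((∀ k, E k ⊆ closure (Q k)) ∧ E l = Q l) ∧
    ∃ X : Set ℝ, (X = Ioo (a : ℝ) m ∨ X = {(m : ℝ)} ∨ X = Ioo (m : ℝ) b) ∧
      E' = Function.update E l X)

lemma mem_midSplit {d : ℕ} {M : Set (Box d)} {Q : Box d} {l : Fin d} {a m b : ℕ} (hab : a < b)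
    (hQ : Q l = Ioo (a : ℝ) b) (E' : Box d) :
    E' ∈ midSplit M Q l m (fun k => closure (Q k)) ↔ ∃ E ∈ M, IsChild Q l a m b E E' := by
  have hab' : (a : ℝ) < b := by exact_mod_cast hab
  simp only [midSplit, IsChild]
  rw [hQ, csInf_Ioo hab', csSup_Ioo hab']
  simp only [mem_union, mem_sdiff, mem_ofPred_eq, mem_iUnion, mem_insert_iff, mem_singleton_iff,
    exists_prop]
  constructor
  · rintro (⟨h1, h2⟩ | ⟨E, ⟨h1, h2⟩, h3⟩)
    · exact ⟨E', h1, Or.inl ⟨fun h => h2 ⟨h1, h⟩, rfl⟩⟩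
    · refine ⟨E, h1, Or.inr ⟨h2, ?_⟩⟩
      rcases h3 with h | h | h
      · exact ⟨_, Or.inl rfl, h⟩
      · exact ⟨_, Or.inr (Or.inl rfl), h⟩
      · exact ⟨_, Or.inr (Or.inr rfl), h⟩
  · rintro ⟨E, hE, ⟨h, rfl⟩ | ⟨h, X, hX, rfl⟩⟩
    · exact Or.inl ⟨hE, fun h' => h h'.2⟩
    · refine Or.inr ⟨E, ⟨hE, h⟩, ?_⟩
      rcases hX with rfl | rfl | rfl <;> simp

section Child

variable {d : ℕ} {G : Fin d → Finset ℕ} {M : Set (Box d)} {Q : Box d} {l : Fin d} {a m b : ℕ}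

lemma IsChild.subset (hQ : Q l = Ioo (a : ℝ) b) (ham : a < m) (hmb : m < b) {E E' : Box d}
    (h : IsChild Q l a m b E E') (k : Fin d) : E' k ⊆ E k := by
  have h1 : (a : ℝ) < m := by exact_mod_cast ham
  have h2 : (m : ℝ) < b := by exact_mod_cast hmb
  rcases h with ⟨_, rfl⟩ | ⟨⟨_, h⟩, X, hX, rfl⟩
  · exact subset_rfl
  · by_cases hk : k = l
    · subst hk
      rw [Function.update_self, h, hQ]
      rcases hX with rfl | rfl | rfl
      · exact Ioo_subset_Ioo_right h2.le
      · simp [h1, h2]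
      · exact Ioo_subset_Ioo_left h1.le
    · rw [Function.update_of_ne hk]

/-- After the bisection, the `l`-th component of every entity in the closure of the bisected
cell lies on one side of the new hyperplane or is equal to it. -/
lemma IsChild.trichotomy (hI : Inv G M) (hQM : Q ∈ M) (hQ : Q l = Ioo (a : ℝ) b)
    (hab : a < b) (hm : a + b = 2 * m) {E E' : Box d} (hE : E ∈ M)
    (h : IsChild Q l a m b E E') (hsub : ∀ k, E k ⊆ closure (Q k)) :
    E' l ⊆ Iio (m : ℝ) ∨ E' l = {(m : ℝ)} ∨ E' l ⊆ Ioi (m : ℝ) := by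
  rcases h with ⟨h, rfl⟩ | ⟨_, X, hX, rfl⟩
  · have hne : E' l ≠ Q l := fun h' => h ⟨hsub, h'⟩
    rcases hI.comp E' hE l with ⟨r, hr⟩ | ⟨a', b', hD, hr⟩
    · rw [hr]
      rcases lt_trichotomy r m with h | h | h
      · left; simpa using h
      · right; left; rw [h]
      · right; right; simpa using h
    · have hDQ : Dyadic (G l) (a, b) := by
        rcases hI.comp Q hQM l with ⟨r, hr⟩ | ⟨a'', b'', hD, hr⟩
        · exact absurd (hQ.symm.trans hr) (Ioo_ne_singleton hab r)
        · obtain ⟨rfl, rfl⟩ := natIoo_inj hab hD.lt (hQ.symm.trans hr)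
          exact hD
      have hlt : a' < b' := hD.lt
      have hs := closure_mono (hsub l)
      rw [closure_closure, hr, hQ, closure_natIoo hlt, closure_natIoo hab,
        Icc_subset_Icc_iff (by exact_mod_cast hlt.le)] at hs
      have hs' : a ≤ a' ∧ b' ≤ b := by exact_mod_cast hs
      rcases hDQ.halving hD hm hs'.1 hs'.2 with h | h | h
      · obtain ⟨rfl, rfl⟩ := Prod.mk.inj h
        exact absurd (hr.trans hQ.symm) hne
      · left
        rw [hr]
        have : (b' : ℝ) ≤ m := by exact_mod_cast h
        exact fun z hz => hz.2.trans_le this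
      · right; right
        rw [hr]
        have : (m : ℝ) ≤ a' := by exact_mod_cast h
        exact fun z hz => this.trans_lt hz.1
  · rw [Function.update_self]
    rcases hX with rfl | rfl | rfl
    · exact Or.inl fun z hz => hz.2
    · exact Or.inr (Or.inl rfl)
    · exact Or.inr (Or.inr fun z hz => hz.1)

lemma inv_midSplit (hI : Inv G M) (hQM : Q ∈ M) (hQc : ∀ k, ∃ a b : ℕ, a < b ∧ Q k = Ioo (a : ℝ) b)
    (hQ : Q l = Ioo (a : ℝ) b) (hab : a < b) (hm : a + b = 2 * m) :
    Inv G (midSplit M Q l m (fun k => closure (Q k))) where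
  comp E' hE' k := by
    obtain ⟨E, hE, h⟩ := (mem_midSplit hab hQ E').1 hE'
    rcases h with ⟨_, rfl⟩ | ⟨⟨_, h⟩, X, hX, rfl⟩
    · exact hI.comp _ hE k
    · by_cases hk : k = l
      · subst hk
        rw [Function.update_self]
        have hDQ : Dyadic (G k) (a, b) := by
          rcases hI.comp Q hQM k with ⟨r, hr⟩ | ⟨a'', b'', hD, hr⟩
          · exact absurd (hQ.symm.trans hr) (Ioo_ne_singleton hab r)
          · obtain ⟨rfl, rfl⟩ := natIoo_inj hab hD.lt (hQ.symm.trans hr)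
            exact hD
        obtain ⟨q, hq, hr⟩ := hDQ
        rcases hX with rfl | rfl | rfl
        · exact Or.inr ⟨a, m, ⟨q, hq, hr.tail ⟨m, hm, Or.inl rfl⟩⟩, rfl⟩
        · exact Or.inl ⟨_, rfl⟩
        · exact Or.inr ⟨m, b, ⟨q, hq, hr.tail ⟨m, hm, Or.inr rfl⟩⟩, rfl⟩
      · rw [Function.update_of_ne hk]
        exact hI.comp _ hE k
  front E' hE' F' hF' hmeet k := by
    have ham : a < m := by omega
    have hmb : m < b := by omega
    obtain ⟨E, hE, hEE⟩ := (mem_midSplit hab hQ E').1 hE'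
    obtain ⟨F, hF, hFF⟩ := (mem_midSplit hab hQ F').1 hF'
    have hEs := hEE.subset hQ ham hmb
    have hFs := hFF.subset hQ ham hmb
    have hEF := hI.front E hE F hF fun k =>
      (hmeet k).mono (inter_subset_inter (hEs k) (closure_mono (hFs k)))
    rcases hFF with ⟨_, rfl⟩ | ⟨⟨h1, h2⟩, X, hX, rfl⟩
    · exact (hEs k).trans (hEF k)
    · by_cases hk : k = l
      · subst hk
        have hEQ : ∀ k, E k ⊆ closure (Q k) := fun k =>
          (hEF k).trans (closure_minimal (h1 k) isClosed_closure)
        have htri := hEE.trichotomy hI hQM hQ hab hm hE hEQ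
        have hb := (hEs k).trans (hEQ k)
        rw [hQ, closure_natIoo hab] at hb
        obtain ⟨y, hy1, hy2⟩ := hmeet k
        rw [Function.update_self] at hy2 ⊢
        have ham' : (a : ℝ) < m := by exact_mod_cast ham
        have hmb' : (m : ℝ) < b := by exact_mod_cast hmb
        rcases hX with rfl | rfl | rfl
        · rw [closure_natIoo ham] at hy2 ⊢
          rcases htri with h | h | h
          · exact fun z hz => ⟨(hb hz).1, (h hz).le⟩
          · rw [h]; simp [ham'.le]
          · exact absurd hy2.2 (not_le.2 (h hy1))
        · rw [closure_singleton, mem_singleton_iff] at hy2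
          rw [closure_singleton]
          subst hy2
          rcases htri with h | h | h
          · exact absurd (h hy1) (by simp)
          · rw [h]
          · exact absurd (h hy1) (by simp)
        · rw [closure_natIoo hmb] at hy2 ⊢
          rcases htri with h | h | h
          · exact absurd hy2.1 (not_le.2 (h hy1))
          · rw [h]; simp [hmb'.le]
          · exact fun z hz => ⟨(h hz).le, (hb hz).2⟩
      · rw [Function.update_of_ne hk]
        exact (hEs k).trans (hEF k)
  hyp E' hE' j t ht := by
    have ham : a < m := by omega
    have hmb : m < b := by omega
    have ham' : (a : ℝ) < m := by exact_mod_cast ham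
    have hmb' : (m : ℝ) < b := by exact_mod_cast hmb
    obtain ⟨E, hE, hEE⟩ := (mem_midSplit hab hQ E').1 hE'
    have hEs := hEE.subset hQ ham hmb
    by_cases hj : E j = {t}
    · obtain ⟨F, hF, hF1, hF2, hF3⟩ := hI.hyp E hE j t hj
      by_cases hsp : (∀ k, F k ⊆ closure (Q k)) ∧ F l = Q l
      · have hEQ : ∀ k, E k ⊆ closure (Q k) := fun k =>
          (hF3 k).trans (closure_minimal (hsp.1 k) isClosed_closure)
        have hb := (hEs l).trans (hEQ l)
        rw [hQ, closure_natIoo hab] at hb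
        have hjl : j ≠ l := by
          rintro rfl
          exact Ioo_ne_singleton hab t (hQ.symm.trans (hsp.2.symm.trans hF1))
        -- `(c, e)` is the half of `(a, b)` whose closure contains the `l`-th component of `E'`.
        have key : ∃ c e : ℕ, c < e ∧ (Ioo (c : ℝ) e = Ioo (a : ℝ) m ∨ Ioo (c : ℝ) e = {(m : ℝ)} ∨
            Ioo (c : ℝ) e = Ioo (m : ℝ) b) ∧ E' l ⊆ Icc (c : ℝ) e := by
          rcases hEE.trichotomy hI hQM hQ hab hm hE hEQ with h | h | h
          · exact ⟨a, m, ham, Or.inl rfl, fun z hz => ⟨(hb hz).1, (h hz).le⟩⟩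
          · exact ⟨a, m, ham, Or.inl rfl, by rw [h]; simp [ham'.le]⟩
          · exact ⟨m, b, hmb, Or.inr (Or.inr rfl), fun z hz => ⟨(h hz).le, (hb hz).2⟩⟩
        obtain ⟨c, e, hce, hX, hsub⟩ := key
        refine ⟨Function.update F l (Ioo (c : ℝ) e),
          (mem_midSplit hab hQ _).2 ⟨F, hF, Or.inr ⟨hsp, _, hX, rfl⟩⟩, ?_, ?_, ?_⟩
        · rw [Function.update_of_ne hjl, hF1]
        · intro k hk
          by_cases hkl : k = l
          · subst hkl
            exact ⟨c, e, hce, by simp⟩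
          · rw [Function.update_of_ne hkl]
            exact hF2 k hk
        · intro k
          by_cases hkl : k = l
          · subst hkl
            rw [Function.update_self, closure_natIoo hce]
            exact hsub
          · rw [Function.update_of_ne hkl]
            exact (hEs k).trans (hF3 k)
      · exact ⟨F, (mem_midSplit hab hQ _).2 ⟨F, hF, Or.inl ⟨hsp, rfl⟩⟩, hF1, hF2,
          fun k => (hEs k).trans (hF3 k)⟩
    · -- The singleton component is new, so `E'` lies in the hyperface bisecting `Q`.
      rcases hEE with ⟨_, rfl⟩ | ⟨hsp, X, hX, rfl⟩
      · exact absurd ht hj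
      · have hjl : j = l := by
          by_contra h
          rw [Function.update_of_ne h] at ht
          exact hj ht
        subst hjl
        rw [Function.update_self] at ht
        subst ht
        have hmt : ({t} : Set ℝ) = {(m : ℝ)} := by
          rcases hX with h | h | h
          · exact absurd h.symm (Ioo_ne_singleton ham t)
          · exact h
          · exact absurd h.symm (Ioo_ne_singleton hmb t)
        rw [hmt]
        refine ⟨Function.update Q j {(m : ℝ)}, (mem_midSplit hab hQ _).2
          ⟨Q, hQM, Or.inr ⟨⟨fun k => subset_closure, rfl⟩, _, Or.inr (Or.inl rfl), rfl⟩⟩, ?_, ?_, ?_⟩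
        · rw [Function.update_self]
        · intro k hk
          rw [Function.update_of_ne hk]
          exact hQc k
        · intro k
          by_cases hkl : k = j
          · subst hkl
            simp
          · rw [Function.update_of_ne hkl, Function.update_of_ne hkl]
            exact hsp.1 k

end Child

lemma exists_inv {d : ℕ} {N : Fin d → ℕ} (hN : ∀ k, 0 < N k) (T : TMesh d N) :
    ∃ G, Inv G T.entities := by
  obtain ⟨M₀, ⟨G, hG, rfl⟩, h⟩ := T.constructed
  refine ⟨G, ?_⟩
  generalize T.entities = M at h
  induction h with
  | refl => exact inv_tensor hN hG
  | tail _ hstep ih =>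
    obtain ⟨Q, hQ, l, a, b, m, hQc, hQl, hm, rfl⟩ := hstep
    have hQc' : ∀ k, ∃ a b : ℕ, a < b ∧ Q k = Ioo (a : ℝ) b := fun k => by
      obtain ⟨a, b, h1, _, h2⟩ := hQc k
      exact ⟨a, b, h1, h2⟩
    have hab : a < b := by
      obtain ⟨a', b', h1, h2⟩ := hQc' l
      have hne : (Ioo (a : ℝ) b).Nonempty := by
        rw [← hQl, h2, nonempty_Ioo]
        exact_mod_cast h1
      exact_mod_cast nonempty_Ioo.1 hne
    exact inv_midSplit ih hQ hQc' hQl hab hm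

end TSpline

namespace TSpline

/-! ### The four arms around a codimension-two entity -/

/-- The shift `1/2` or `-1/2`. -/
noncomputable def sg (c : Bool) : ℝ := if c then 1 / 2 else -(1 / 2)

lemma shift_mem {a b n : ℕ} (h : (n : ℝ) ∈ Ioo (a : ℝ) b) (c : Bool) :
    (n : ℝ) + sg c ∈ Ioo (a : ℝ) b := by
  have h1 : a + 1 ≤ n := by exact_mod_cast h.1
  have h2 : n + 1 ≤ b := by exact_mod_cast h.2
  have h1' : (a : ℝ) + 1 ≤ n := by exact_mod_cast h1
  have h2' : (n : ℝ) + 1 ≤ b := by exact_mod_cast h2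
  cases c <;> simp only [sg, mem_Ioo] <;> norm_num <;> constructor <;> linarith

lemma mem_Icc_of_shift {a b n : ℕ} {c : Bool} (h : (n : ℝ) + sg c ∈ Ioo (a : ℝ) b) :
    (n : ℝ) ∈ Icc (a : ℝ) b := by
  have h1 : (a : ℝ) < (n + 1 : ℕ) := by
    push_cast
    cases c <;> simp [sg] at h <;> linarith [h.1]
  have h2 : (n : ℝ) < (b + 1 : ℕ) := by
    push_cast
    cases c <;> simp [sg] at h <;> linarith [h.2]
  have h1' : a < n + 1 := by exact_mod_cast h1
  have h2' : n < b + 1 := by exact_mod_cast h2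
  exact ⟨by exact_mod_cast Nat.lt_succ_iff.1 h1', by exact_mod_cast Nat.lt_succ_iff.1 h2'⟩

lemma exists_shift_mem {a b n : ℕ} (hab : a < b) (h : (n : ℝ) ∈ Icc (a : ℝ) b) :
    ∃ c, (n : ℝ) + sg c ∈ Ioo (a : ℝ) b := by
  have h1 : a ≤ n := by exact_mod_cast h.1
  have h2 : n ≤ b := by exact_mod_cast h.2
  by_cases hn : n = b
  · have : (a : ℝ) + 1 ≤ n := by exact_mod_cast (by omega : a + 1 ≤ n)
    refine ⟨false, ?_, ?_⟩ <;> simp [sg] <;> linarith [h.2]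
  · have : (n : ℝ) + 1 ≤ b := by exact_mod_cast (by omega : n + 1 ≤ b)
    refine ⟨true, ?_, ?_⟩ <;> simp [sg] <;> linarith [h.1]

lemma shift_ne_nat (n : ℕ) (c : Bool) (k : ℕ) : (n : ℝ) + sg c ≠ k := by
  intro h
  cases c
  · have h' : (2 * n : ℝ) = 2 * k + 1 := by simp [sg] at h; linarith
    have : 2 * n = 2 * k + 1 := by exact_mod_cast h'
    omega
  · have h' : (2 * n + 1 : ℝ) = 2 * k := by simp [sg] at h; linarith
    have : 2 * n + 1 = 2 * k := by exact_mod_cast h'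
    omega

lemma mem_of_shifts {a b z : ℝ} {c c' : Bool} (hc : c ≠ c') (h : z + sg c ∈ Ioo a b)
    (h' : z + sg c' ∈ Ioo a b) : z ∈ Ioo a b := by
  cases c <;> cases c' <;> simp [sg] at hc h h' ⊢ <;> constructor <;> linarith [h.1, h.2, h'.1, h'.2]

lemma comp_ioo {K : ℕ} {S : Set ℝ} (h : IsSingletonComp K S ∨ IsIntervalComp K S) {y : ℝ}
    (hy : y ∈ S) (hn : ∀ n : ℕ, y ≠ n) : ∃ a b : ℕ, a < b ∧ S = Ioo (a : ℝ) b := by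
  rcases h with ⟨n, _, rfl⟩ | ⟨a, b, h, _, rfl⟩
  · exact absurd hy (hn n)
  · exact ⟨a, b, h, rfl⟩

/-- `J` is an interior entity whose singleton directions are the two values of `D`, and `x` is a
point of `J` whose coordinates in the other directions are not integers. -/
structure Star {d : ℕ} {N : Fin d → ℕ} (T : TMesh d N) (J : Box d) (D : Bool → Fin d)
    (x : Fin d → ℝ) : Prop where
  mem : J ∈ T.entities
  inj : ∀ b, D b ≠ D (!b)
  sing : ∀ b, J (D b) = {x (D b)}
  int : ∀ b, ∃ n : ℕ, x (D b) = n
  ioo : ∀ k, (∀ b, k ≠ D b) → ∃ a b : ℕ, a < b ∧ J k = Ioo (a : ℝ) b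
  nonint : ∀ k, (∀ b, k ≠ D b) → ∀ n : ℕ, x k ≠ n
  xmem : ∀ k, x k ∈ J k
  pos : ∀ k, 0 < x k ∧ x k < N k

/-- The point `x` shifted by `± 1/2` in the direction `D b`. -/
noncomputable def arm {d : ℕ} (D : Bool → Fin d) (x : Fin d → ℝ) (b c : Bool) : Fin d → ℝ :=
  Function.update x (D b) (x (D b) + sg c)

lemma mem_toSet {d : ℕ} {E : Box d} {y : Fin d → ℝ} : y ∈ toSet E ↔ ∀ k, y k ∈ E k := by
  simp [toSet]

lemma TMesh.eq_of_mem {d : ℕ} {N : Fin d → ℕ} (T : TMesh d N) {E F : Box d}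
    (hE : E ∈ T.entities) (hF : F ∈ T.entities) {y : Fin d → ℝ} (h1 : y ∈ toSet E)
    (h2 : y ∈ toSet F) : E = F := by
  by_contra h
  have := T.pairwise_disjoint E hE F hF h
  exact (this ▸ (⟨h1, h2⟩ : y ∈ toSet E ∩ toSet F) : y ∈ (∅ : Set (Fin d → ℝ)))

lemma TMesh.subset_frontier {d : ℕ} {N : Fin d → ℕ} (T : TMesh d N) {E F : Box d}
    (hE : E ∈ T.entities) (hF : F ∈ T.entities) (hne : E ≠ F)
    (h : ∀ k, E k ⊆ closure (F k)) : toSet E ⊆ frontier (toSet F) := by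
  intro y hy
  refine ⟨?_, fun hy' => hne (T.eq_of_mem hE hF hy (interior_subset hy'))⟩
  rw [toSet, closure_pi_set]
  exact fun k _ => h k (mem_toSet.1 hy k)

section StarLemmas

variable {d : ℕ} {N : Fin d → ℕ} {T : TMesh d N} {J : Box d} {D : Bool → Fin d} {x : Fin d → ℝ}

lemma ne_dir {b : Bool} {k : Fin d} (h1 : k ≠ D b) (h2 : k ≠ D (!b)) :
    ∀ b', k ≠ D b' := by
  intro b'
  cases b <;> cases b' <;> simpa using by assumption

lemma arm_self (b c : Bool) : arm D x b c (D b) = x (D b) + sg c := by simp [arm]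

lemma arm_of_ne {b c : Bool} {k : Fin d} (h : k ≠ D b) : arm D x b c k = x k := by simp [arm, h]

lemma Star.not_mem (S : Star T J D x) {F : Box d} (hF : F ∈ T.entities) {b c : Bool}
    (h : arm D x b c ∈ toSet F) : x ∉ toSet F := by
  intro hx
  have hJF := T.eq_of_mem S.mem hF (mem_toSet.2 S.xmem) hx
  subst hJF
  have := mem_toSet.1 h (D b)
  rw [arm_self, S.sing, mem_singleton_iff] at this
  cases c <;> simp [sg] at this

lemma Star.exists_arm (S : Star T J D x) (b c : Bool) :
    ∃ F ∈ T.entities, arm D x b c ∈ toSet F := by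
  have : arm D x b c ∈ domain N := by
    intro k _
    by_cases hk : k = D b
    · subst hk
      rw [arm_self]
      obtain ⟨n, hn⟩ := S.int b
      have hp := S.pos (D b)
      rw [hn] at hp ⊢
      have := shift_mem (a := 0) (b := N (D b)) (n := n) (by simpa using hp) c
      exact ⟨by simpa using this.1.le, this.2.le⟩
    · rw [arm_of_ne hk]
      exact ⟨(S.pos k).1.le, (S.pos k).2.le⟩
  rw [← T.union_eq] at this
  simpa using this

lemma Star.arm_ioo (S : Star T J D x) {F : Box d} (hF : F ∈ T.entities) {b c : Bool}
    (h : arm D x b c ∈ toSet F) {k : Fin d} (hk : k ≠ D (!b)) :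
    ∃ a b : ℕ, a < b ∧ F k = Ioo (a : ℝ) b := by
  refine comp_ioo (T.mem_entity F hF k) (mem_toSet.1 h k) ?_
  by_cases hb : k = D b
  · subst hb
    rw [arm_self]
    obtain ⟨n, hn⟩ := S.int b
    rw [hn]
    exact shift_ne_nat n c
  · rw [arm_of_ne hb]
    exact S.nonint k (ne_dir hb hk)

lemma mem_of_arm_mem {F : Box d} {b c : Bool}
    (h : arm D x b c ∈ toSet F) {k : Fin d} (hk : k ≠ D b) : x k ∈ F k := by
  have := mem_toSet.1 h k
  rwa [arm_of_ne hk] at this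

/-- Along an arm the entity is either a hyperface orthogonal to the direction `D (!b)`, or has an
interval component there. -/
lemma Star.arm_cases (S : Star T J D x) {F : Box d} (hF : F ∈ T.entities) {b c : Bool}
    (h : arm D x b c ∈ toSet F) (hH : F (D (!b)) ≠ {x (D (!b))}) :
    ∃ a e : ℕ, a < e ∧ F (D (!b)) = Ioo (a : ℝ) e := by
  have hm := mem_of_arm_mem h (S.inj b).symm
  rcases T.mem_entity F hF (D (!b)) with ⟨n, _, hn⟩ | ⟨a, e, hae, _, he⟩
  · rw [hn, mem_singleton_iff] at hm
    exact absurd (hm ▸ hn) hH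
  · exact ⟨a, e, hae, he⟩

lemma Star.sub_arm (S : Star T J D x) {G : Fin d → Finset ℕ} (hI : Inv G T.entities)
    {F : Box d} (hF : F ∈ T.entities) {b c : Bool} (h : arm D x b c ∈ toSet F) :
    ∀ k, J k ⊆ closure (F k) := by
  refine hI.front J S.mem F hF fun k => ⟨x k, S.xmem k, ?_⟩
  by_cases hb : k = D b
  · subst hb
    obtain ⟨a, e, hae, he⟩ := S.arm_ioo hF h (S.inj b)
    have hm := mem_toSet.1 h (D b)
    rw [arm_self] at hm
    obtain ⟨n, hn⟩ := S.int b
    rw [he, hn] at hm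
    rw [he, hn, closure_natIoo hae]
    exact mem_Icc_of_shift hm
  · exact subset_closure (mem_of_arm_mem h hb)

/-- An entity whose closure contains `J`, which has an interval component in every direction
except possibly `D (!b)`, and whose component in that direction contains that of `x`, contains one
of the two arms in the direction `D b`. -/
lemma Star.exists_arm_mem (S : Star T J D x) {F : Box d} {b : Bool}
    (hsub : ∀ k, J k ⊆ closure (F k)) (hx : x (D (!b)) ∈ F (D (!b)))
    (hk : ∀ k, k ≠ D (!b) → ∃ a b : ℕ, a < b ∧ F k = Ioo (a : ℝ) b) :
    ∃ c, arm D x b c ∈ toSet F := by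
  obtain ⟨a, e, hae, he⟩ := hk (D b) (S.inj b)
  obtain ⟨n, hn⟩ := S.int b
  have h1 := hsub _ (S.xmem (D b))
  rw [he, hn, closure_natIoo hae] at h1
  obtain ⟨c, hc⟩ := exists_shift_mem hae h1
  refine ⟨c, mem_toSet.2 fun k => ?_⟩
  by_cases hb : k = D b
  · subst hb
    rw [arm_self, he, hn]
    exact hc
  rw [arm_of_ne hb]
  by_cases hb' : k = D (!b)
  · subst hb'
    exact hx
  obtain ⟨a, e, hae, he⟩ := hk k hb'
  have h1 := hsub _ (S.xmem k)
  rw [he, closure_natIoo hae] at h1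
  have hni := S.nonint k (ne_dir hb hb')
  rw [he]
  exact ⟨lt_of_le_of_ne h1.1 (hni a).symm, lt_of_le_of_ne h1.2 (hni e)⟩

/-- At most one of the four arms does not run inside a hyperface. Two opposite arms cannot both
fail, because `J` lies in a hyperface orthogonal to the other direction; two adjacent arms cannot,
because the two cells would both contain the quadrant between the arms, hence coincide and, being
convex, contain `x`. -/
lemma Star.missing_unique (S : Star T J D x) {G : Fin d → Finset ℕ} (hI : Inv G T.entities)
    {f : Bool → Bool → Box d} (hf : ∀ b c, f b c ∈ T.entities)
    (hfm : ∀ b c, arm D x b c ∈ toSet (f b c)) {b c b' c' : Bool}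
    (h : f b c (D (!b)) ≠ {x (D (!b))}) (h' : f b' c' (D (!b')) ≠ {x (D (!b'))}) :
    b = b' ∧ c = c' := by
  by_cases hb : b = b'
  · subst hb
    refine ⟨rfl, ?_⟩
    by_contra hcc
    obtain ⟨F, hF, hF1, hF2, hF3⟩ := hI.hyp J S.mem (D (!b)) _ (S.sing (!b))
    obtain ⟨c'', hc''⟩ := S.exists_arm_mem (b := b) hF3 (by simp [hF1]) hF2
    have hFf := T.eq_of_mem hF (hf b c'') hc'' (hfm b c'')
    rw [hFf] at hF1
    have : c'' = c ∨ c'' = c' := by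
      cases c <;> cases c' <;> cases c'' <;> simp at hcc ⊢
    rcases this with rfl | rfl
    · exact h hF1
    · exact h' hF1
  · have hb' : b' = !b := by cases b <;> cases b' <;> simp at hb ⊢
    subst hb'
    exfalso
    rw [Bool.not_not] at h'
    have hinj := S.inj b
    obtain ⟨a, e, hae, he⟩ := S.arm_cases (hf b c) (hfm b c) h
    obtain ⟨a', e', hae', he'⟩ := S.arm_cases (hf (!b) c') (hfm (!b) c') (by simpa using h')
    rw [Bool.not_not] at he'
    have hx := mem_of_arm_mem (hfm b c) hinj.symm
    have hx' := mem_of_arm_mem (hfm (!b) c') hinj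
    have heq : f b c = f (!b) c' := by
      -- the point in the quadrant between the two arms
      refine T.eq_of_mem (hf _ _) (hf _ _)
        (y := Function.update (arm D x b c) (D (!b)) (x (D (!b)) + sg c')) ?_ ?_
      · refine mem_toSet.2 fun k => ?_
        by_cases hk : k = D (!b)
        · subst hk
          obtain ⟨n, hn⟩ := S.int (!b)
          rw [Function.update_self, he, hn]
          rw [he, hn] at hx
          exact shift_mem hx c'
        · rw [Function.update_of_ne hk]
          exact mem_toSet.1 (hfm b c) k
      · refine mem_toSet.2 fun k => ?_
        by_cases hk : k = D (!b)
        · subst hk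
          rw [Function.update_self]
          have := mem_toSet.1 (hfm (!b) c') (D (!b))
          rwa [arm_self] at this
        · rw [Function.update_of_ne hk]
          by_cases hk' : k = D b
          · subst hk'
            obtain ⟨n, hn⟩ := S.int b
            rw [arm_self, he', hn]
            rw [he', hn] at hx'
            exact shift_mem hx' c
          · rw [arm_of_ne hk']
            exact mem_of_arm_mem (hfm (!b) c') hk
    refine S.not_mem (hf b c) (hfm b c) (mem_toSet.2 fun k => ?_)
    by_cases hk : k = D b
    · subst hk
      rw [heq]
      exact hx'
    · exact mem_of_arm_mem (hfm b c) hk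

lemma Star.hyper_inj (S : Star T J D x)
    {f : Bool → Bool → Box d} (hf : ∀ b c, f b c ∈ T.entities)
    (hfm : ∀ b c, arm D x b c ∈ toSet (f b c)) {b c b' c' : Bool}
    (h : f b c (D (!b)) = {x (D (!b))}) (he : f b c = f b' c') :
    b = b' ∧ c = c' := by
  by_cases hb : b = b'
  · subst hb
    refine ⟨rfl, ?_⟩
    by_contra hcc
    refine S.not_mem (hf b c) (hfm b c) (mem_toSet.2 fun k => ?_)
    by_cases hk : k = D b
    · subst hk
      obtain ⟨a, e, hae, hio⟩ := S.arm_ioo (hf b c) (hfm b c) (S.inj b)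
      have h1 := mem_toSet.1 (hfm b c) (D b)
      have h2 := mem_toSet.1 (hfm b c') (D b)
      rw [← he] at h2
      rw [arm_self, hio] at h1 h2
      rw [hio]
      exact mem_of_shifts hcc h1 h2
    · exact mem_of_arm_mem (hfm b c) hk
  · have hb' : b' = !b := by cases b <;> cases b' <;> simp at hb ⊢
    subst hb'
    obtain ⟨a, e, hae, hio⟩ := S.arm_ioo (hf (!b) c') (hfm (!b) c') (S.inj (!b))
    rw [← he, h] at hio
    exact absurd hio.symm (Ioo_ne_singleton hae _)

end StarLemmas

lemma exists_star {d : ℕ} {N : Fin d → ℕ} (hd : 2 ≤ d) (T : TMesh d N) {J : Box d}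
    (hJ : J ∈ Hdim T (d - 2)) (hbd : ¬ toSet J ⊆ bdryDomain N) :
    ∃ D x, Star T J D x := by
  obtain ⟨hJM, hcard⟩ := hJ
  rw [show d - (d - 2) = 2 by omega, ncard_eq_two] at hcard
  obtain ⟨i, j, hij, hs⟩ := hcard
  have hmem : ∀ k, (∃ r : ℝ, J k = {r}) ↔ k = i ∨ k = j := fun k => by
    change k ∈ singDirs J ↔ _
    rw [hs]; simp
  obtain ⟨z, hzJ, hz⟩ := not_subset.1 hbd
  rw [mem_toSet] at hzJ
  have hzD : z ∈ domain N := by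
    rw [← T.union_eq]
    exact mem_biUnion hJM (mem_toSet.2 hzJ)
  have hzi : z ∈ interior (domain N) := by
    by_contra h
    exact hz ⟨subset_closure hzD, h⟩
  rw [domain, interior_pi_set finite_univ] at hzi
  have hzp : ∀ k, 0 < z k ∧ z k < N k := fun k => by
    have : z k ∈ interior (Icc (0 : ℝ) (N k)) := hzi k (mem_univ k)
    rwa [interior_Icc] at this
  have key : ∀ k, ∃ y : ℝ, y ∈ J k ∧ (0 < y ∧ y < N k) ∧
      ((k = i ∨ k = j) → J k = {y} ∧ ∃ n : ℕ, y = n) ∧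
      (¬ (k = i ∨ k = j) → (∃ a b : ℕ, a < b ∧ J k = Ioo (a : ℝ) b) ∧ ∀ n : ℕ, y ≠ n) := by
    intro k
    rcases T.mem_entity J hJM k with ⟨n, _, hn⟩ | ⟨a, b, hab, hb, he⟩
    · have h1 := (hmem k).1 ⟨_, hn⟩
      have h2 := hzJ k
      rw [hn, mem_singleton_iff] at h2
      refine ⟨n, by simp [hn], h2 ▸ hzp k, fun _ => ⟨hn, n, rfl⟩, fun h => absurd h1 h⟩
    · have h1 : ¬ (k = i ∨ k = j) := by
        rw [← hmem]
        rintro ⟨r, hr⟩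
        exact Ioo_ne_singleton hab r (he.symm.trans hr)
      have hab' : (a : ℝ) + 1 ≤ b := by exact_mod_cast hab
      have hb' : (b : ℝ) ≤ N k := by exact_mod_cast hb
      have ha : (0 : ℝ) ≤ a := by positivity
      refine ⟨a + sg true, ?_, ?_, fun h => absurd h h1,
        fun _ => ⟨⟨a, b, hab, he⟩, shift_ne_nat a true⟩⟩
      · rw [he]; simp [sg]; linarith
      · simp [sg]; constructor <;> linarith
  choose x hx1 hx2 hx3 hx4 using key
  have hD : ∀ b, (bif b then i else j) = i ∨ (bif b then i else j) = j := by simp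
  have hk : ∀ k, (∀ b, k ≠ (bif b then i else j)) → ¬ (k = i ∨ k = j) := by
    intro k h
    have := h true
    have := h false
    simp_all
  exact ⟨fun b => bif b then i else j, x,
    { mem := hJM
      inj := fun b => by cases b <;> simp [hij, hij.symm]
      sing := fun b => (hx3 _ (hD b)).1
      int := fun b => (hx3 _ (hD b)).2
      ioo := fun k h => (hx4 k (hk k h)).1
      nonint := fun k h => (hx4 k (hk k h)).2
      xmem := hx1
      pos := hx2 }⟩

/-! ### Counting -/

lemma mem_hyper_iff {d : ℕ} {N : Fin d → ℕ} (hd : 2 ≤ d) (T : TMesh d N) (F : Box d) :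
    F ∈ Hdim T (d - 1) ↔ F ∈ T.entities ∧ ∃ l, (∃ r : ℝ, F l = {r}) ∧
      ∀ k, k ≠ l → ∃ a b : ℕ, a < b ∧ F k = Ioo (a : ℝ) b := by
  simp only [Hdim, mem_ofPred_eq]
  rw [show d - (d - 1) = 1 by omega, ncard_eq_one]
  refine and_congr_right fun hF => exists_congr fun l => ?_
  constructor
  · intro h
    have hm : ∀ k, (∃ r : ℝ, F k = {r}) ↔ k = l := fun k => by
      change k ∈ singDirs F ↔ _
      rw [h]; simp
    refine ⟨(hm l).2 rfl, fun k hk => ?_⟩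
    rcases T.mem_entity F hF k with ⟨n, _, hn⟩ | ⟨a, b, hab, _, he⟩
    · exact absurd ((hm k).1 ⟨_, hn⟩) hk
    · exact ⟨a, b, hab, he⟩
  · rintro ⟨h1, h2⟩
    ext k
    constructor
    · rintro ⟨r, hr⟩
      by_contra hk
      obtain ⟨a, b, hab, he⟩ := h2 k hk
      exact Ioo_ne_singleton hab r (he.symm.trans hr)
    · rintro rfl
      exact h1

lemma mem_cell_iff {d : ℕ} {N : Fin d → ℕ} (T : TMesh d N) (F : Box d) :
    F ∈ Hdim T d ↔ F ∈ T.entities ∧ ∀ k, ∃ a b : ℕ, a < b ∧ F k = Ioo (a : ℝ) b := by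
  simp only [Hdim, mem_ofPred_eq]
  rw [Nat.sub_self, ncard_eq_zero]
  refine and_congr_right fun hF => ?_
  constructor
  · intro h k
    rcases T.mem_entity F hF k with ⟨n, _, hn⟩ | ⟨a, b, hab, _, he⟩
    · exact absurd (h ▸ (⟨_, hn⟩ : k ∈ singDirs F) : k ∈ (∅ : Set (Fin d))) (notMem_empty k)
    · exact ⟨a, b, hab, he⟩
  · intro h
    refine eq_empty_of_forall_notMem ?_
    rintro k ⟨r, hr⟩
    obtain ⟨a, b, hab, he⟩ := h k
    exact Ioo_ne_singleton hab r (he.symm.trans hr)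

lemma sub_closure_of_sub_frontier {d : ℕ} {E F : Box d} {x : Fin d → ℝ} (hx : ∀ k, x k ∈ E k)
    (h : toSet E ⊆ frontier (toSet F)) : ∀ k, E k ⊆ closure (F k) := by
  intro k y hy
  have : Function.update x k y ∈ toSet E := mem_toSet.2 fun k' => by
    by_cases hk : k' = k
    · subst hk; simpa using hy
    · simpa [hk] using hx k'
  have h2 := (h this).1
  rw [toSet, closure_pi_set] at h2
  simpa using h2 k (mem_univ k)

/-- The hyperfaces having `J` in their boundary are exactly those containing an arm. -/
lemma Star.hyper_eq_image {d : ℕ} {N : Fin d → ℕ} (hd : 2 ≤ d) {T : TMesh d N} {J : Box d}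
    {D : Bool → Fin d} {x : Fin d → ℝ} (S : Star T J D x) {G : Fin d → Finset ℕ}
    (hI : Inv G T.entities) {f : Bool → Bool → Box d} (hf : ∀ b c, f b c ∈ T.entities)
    (hfm : ∀ b c, arm D x b c ∈ toSet (f b c)) :
    {F ∈ Hdim T (d - 1) | toSet J ⊆ frontier (toSet F)} =
      (fun p : Bool × Bool => f p.1 p.2) ''
        {p | f p.1 p.2 (D (!p.1)) = {x (D (!p.1))}} := by
  ext F
  simp only [mem_ofPred_eq, mem_image, Prod.exists]
  constructor
  · rintro ⟨hF, hfr⟩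
    obtain ⟨hFM, l, ⟨r, hr⟩, hk⟩ := (mem_hyper_iff hd T F).1 hF
    have hsub := sub_closure_of_sub_frontier S.xmem hfr
    have hl : ∃ b, l = D (!b) := by
      by_contra! h
      obtain ⟨a, e, hae, he⟩ := S.ioo l fun b => by simpa using h (!b)
      have h1 := hsub l
      rw [hr, closure_singleton, he] at h1
      have hne : (Ioo (a : ℝ) e).Nonempty := nonempty_Ioo.2 (by exact_mod_cast hae)
      exact Ioo_ne_singleton hae r ((subset_singleton_iff_eq.1 h1).resolve_left hne.ne_empty)
    obtain ⟨b, rfl⟩ := hl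
    have hxr : x (D (!b)) = r := by
      have := hsub _ (S.xmem (D (!b)))
      rwa [hr, closure_singleton] at this
    subst hxr
    obtain ⟨c, hc⟩ := S.exists_arm_mem (b := b) hsub (by simp [hr]) hk
    have := T.eq_of_mem (hf b c) hFM (hfm b c) hc
    exact ⟨b, c, by rw [this, hr], this⟩
  · rintro ⟨b, c, h, rfl⟩
    refine ⟨(mem_hyper_iff hd T _).2 ⟨hf b c, D (!b), ⟨_, h⟩,
      fun k hk => S.arm_ioo (hf b c) (hfm b c) hk⟩, ?_⟩
    refine T.subset_frontier S.mem (hf b c) (fun he => ?_) (S.sub_arm hI (hf b c) (hfm b c))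
    exact S.not_mem (hf b c) (hfm b c) (he ▸ mem_toSet.2 S.xmem)

/-- An arm not contained in a hyperface makes `J` hang on the cell containing that arm. -/
lemma Star.tjdata_of_missing {d : ℕ} {N : Fin d → ℕ} {T : TMesh d N} {J : Box d}
    {D : Bool → Fin d} {x : Fin d → ℝ} (S : Star T J D x) {G : Fin d → Finset ℕ}
    (hI : Inv G T.entities) {Q : Box d} (hQ : Q ∈ T.entities) {b c : Bool}
    (hm : arm D x b c ∈ toSet Q) (h : Q (D (!b)) ≠ {x (D (!b))}) :
    TJData T J Q (D (!b)) (D b) := by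
  have hsub := S.sub_arm hI hQ hm
  have hx := mem_of_arm_mem hm (S.inj b).symm
  obtain ⟨a, e, hae, he⟩ := S.arm_cases hQ hm h
  have hxQ := S.not_mem hQ hm
  refine ⟨(mem_cell_iff T Q).2 ⟨hQ, fun k => ?_⟩, ?_, ?_, (S.inj b).symm, ⟨_, S.sing _⟩,
    ⟨_, S.sing _⟩, ?_, ?_, ?_⟩
  · by_cases hk : k = D (!b)
    · subst hk; exact ⟨a, e, hae, he⟩
    · exact S.arm_ioo hQ hm hk
  · refine T.subset_frontier S.mem hQ (fun h' => ?_) hsub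
    exact hxQ (h' ▸ mem_toSet.2 S.xmem)
  · refine eq_empty_of_forall_notMem ?_
    rintro y ⟨hy1, hy2⟩
    rw [toSet, closure_pi_set] at hy1
    have h1 : y (D (!b)) ∈ closure (J (D (!b))) := hy1 (D (!b)) (mem_univ _)
    have h2 : y (D (!b)) ∈ frontier (Q (D (!b))) := hy2 (D (!b)) (mem_univ _)
    rw [S.sing, closure_singleton, mem_singleton_iff] at h1
    rw [he] at hx h2
    rw [isOpen_Ioo.frontier_eq, h1] at h2
    exact h2.2 hx
  · rw [S.sing]; simpa using hx
  · rw [S.sing]; exact h.symm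
  · obtain ⟨a', e', hae', he'⟩ := S.arm_ioo hQ hm (S.inj b)
    have h1 := hsub _ (S.xmem (D b))
    rw [S.sing, singleton_subset_iff]
    rw [he'] at h1 ⊢
    rw [isOpen_Ioo.frontier_eq]
    refine ⟨h1, fun h2 => hxQ (mem_toSet.2 fun k => ?_)⟩
    by_cases hk : k = D b
    · subst hk; rw [he']; exact h2
    · exact mem_of_arm_mem hm hk

lemma Star.missing_of_tjdata {d : ℕ} {N : Fin d → ℕ} {T : TMesh d N} {J : Box d}
    {D : Bool → Fin d} {x : Fin d → ℝ} (S : Star T J D x) {Q : Box d} {i j : Fin d}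
    (h : TJData T J Q i j) :
    ∃ b c, i = D (!b) ∧ j = D b ∧ Q ∈ T.entities ∧ arm D x b c ∈ toSet Q ∧
      Q (D (!b)) ≠ {x (D (!b))} := by
  obtain ⟨hQ, hfr, -, hij, ⟨r, hr⟩, ⟨r', hr'⟩, hs, hne, -⟩ := h
  obtain ⟨hQM, hQc⟩ := (mem_cell_iff T Q).1 hQ
  have hdir : ∀ k, (∃ r : ℝ, J k = {r}) → ∃ b, k = D b := by
    rintro k ⟨r, hr⟩
    by_contra! hk
    obtain ⟨a, e, hae, he⟩ := S.ioo k hk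
    exact Ioo_ne_singleton hae r (he.symm.trans hr)
  obtain ⟨b', rfl⟩ := hdir i ⟨r, hr⟩
  obtain ⟨b, rfl⟩ := hdir j ⟨r', hr'⟩
  have hb : b' = !b := by
    cases b <;> cases b' <;> simp at hij ⊢
  subst hb
  obtain ⟨c, hc⟩ := S.exists_arm_mem (b := b) (sub_closure_of_sub_frontier S.xmem hfr)
    (hs (S.xmem _)) (fun k _ => hQc k)
  exact ⟨b, c, rfl, rfl, hQM, hc, by rw [← S.sing]; exact hne.symm⟩

end TSpline

/-- Every `(d-2)`-dimensional mesh entity not contained in `∂Ω` lies in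
the boundary of at least three and at most four hyperfaces; consequently every
T-junction has valence exactly 3 and its associated cell, orthogonal direction and
pointing direction are uniquely determined. -/
theorem TSpline.tjunction_valence_and_uniqueness
    {d : ℕ} {N : Fin d → ℕ} (hd : 2 ≤ d) (T : TSpline.TMesh d N)
    (J : TSpline.Box d) (hJ : J ∈ TSpline.Hdim T (d - 2))
    (hbd : ¬ TSpline.toSet J ⊆ TSpline.bdryDomain N) :
    (3 ≤ TSpline.valence T J ∧ TSpline.valence T J ≤ 4) ∧
    (TSpline.IsTJunction T J →
      TSpline.valence T J = 3 ∧
      (∃ Q : TSpline.Box d, ∃ i j : Fin d, TSpline.TJData T J Q i j) ∧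
      ∀ Q Q' : TSpline.Box d, ∀ i j i' j' : Fin d,
        TSpline.TJData T J Q i j → TSpline.TJData T J Q' i' j' →
        Q = Q' ∧ i = i' ∧ j = j') := by
  obtain ⟨D, x, S⟩ := TSpline.exists_star hd T hJ hbd
  have hN : ∀ k, 0 < N k := fun k => by
    have := S.pos k
    exact_mod_cast this.1.trans this.2
  obtain ⟨G, hI⟩ := TSpline.exists_inv hN T
  choose f hf hfm using S.exists_arm
  -- `A` is the set of arms running inside hyperfaces.
  set A : Set (Bool × Bool) := {p | f p.1 p.2 (D (!p.1)) = {x (D (!p.1))}} with hA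
  have hval : TSpline.valence T J = A.ncard := by
    rw [TSpline.valence, S.hyper_eq_image hd hI hf hfm]
    refine InjOn.ncard_image ?_
    rintro ⟨b, c⟩ hp ⟨b', c'⟩ _ he
    obtain ⟨rfl, rfl⟩ := S.hyper_inj hf hfm hp he
    rfl
  have hcompl : ∀ p ∈ Aᶜ, ∀ q ∈ Aᶜ, p = q := by
    rintro ⟨b, c⟩ hp ⟨b', c'⟩ hq
    obtain ⟨rfl, rfl⟩ := S.missing_unique hI hf hfm hp hq
    rfl
  have hsum : A.ncard + Aᶜ.ncard = 4 := by
    rw [ncard_add_ncard_compl]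
    simp
  have hle : Aᶜ.ncard ≤ 1 := (ncard_le_one (toFinite _)).2 hcompl
  refine ⟨by omega, fun hT => ?_⟩
  have hlt := hT.2.2
  have hpos : 0 < Aᶜ.ncard := by omega
  obtain ⟨⟨b, c⟩, hbc⟩ := (ncard_pos (toFinite _)).1 hpos
  refine ⟨by omega, ⟨f b c, D (!b), D b, S.tjdata_of_missing hI (hf b c) (hfm b c) hbc⟩, ?_⟩
  intro Q Q' i j i' j' h h'
  obtain ⟨b₁, c₁, rfl, rfl, hQ, hm, hne⟩ := S.missing_of_tjdata h
  obtain ⟨b₂, c₂, rfl, rfl, hQ', hm', hne'⟩ := S.missing_of_tjdata h'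
  have e := T.eq_of_mem hQ (hf b₁ c₁) hm (hfm b₁ c₁)
  have e' := T.eq_of_mem hQ' (hf b₂ c₂) hm' (hfm b₂ c₂)
  subst e e'
  obtain ⟨rfl, rfl⟩ := S.missing_unique hI hf hfm hne hne'
  exact ⟨rfl, rfl, rfl⟩
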